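/- arXiv:1605.07330 — 4 statements merged into one kernel-verified Lean document; each statement's English description precedes it below -/
import Mathlib

section
/- The monoid (X,⋆) is freely generated by L := (2) and R := (1,1): the monoid homomorphism from the free monoid on two generators to (X,⋆) sending one generator to (2) and the other to (1,1) is bijective. -/
/-- Finite continued fraction `[0; n₁, …, n_k] = 1/(n₁ + 1/(n₂ + ⋯ + 1/n_k))`,
with the empty tuple giving `0`. -/
def cf : List ℕ → ℚ
  | [] => 0
  | n :: t => 1 / (n + cf t)

/-- `theta (n₁, …, n_k) = [0; n₁, …, n_k, 1]`. -/
def theta (a : List ℕ) : ℚ := cf (a ++ [1])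

/-- Membership in `X`: a nonempty tuple of positive integers. -/
def IsX (a : List ℕ) : Prop := a ≠ [] ∧ ∀ n ∈ a, 0 < n

/-- The monoid operation `⋆` on `X` (concatenation of paths in the Farey tree),
with the zero-elimination rules `(…, m, 0, n, …) = (…, m + n, …)` and a trailing
zero dropped, built into the definition. -/
def star (x y : List ℕ) : List ℕ :=
  match y with
  | [] => x
  | m :: rest =>
    if x.length % 2 = 0 then
      if m = 1 then
        match rest with
        | [] => x
        | m2 :: rest2 => x.dropLast ++ (x.getLastD 0 + m2) :: rest2
      else x ++ (m - 1) :: rest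
    else x.dropLast ++ (x.getLastD 0 + m - 1) :: rest

/-- The involution `K`: `K(1) = (1)`, `K(1, n₂, …, n_k) = (n₂+1, n₃, …, n_k)`,
and `K(n₁, …, n_k) = (1, n₁−1, n₂, …, n_k)` for `n₁ ≥ 2`. -/
def K : List ℕ → List ℕ
  | [] => []
  | [1] => [1]
  | 1 :: n :: rest => (n + 1) :: rest
  | n :: rest => 1 :: (n - 1) :: rest

/-- The Farey map on tuples: `(n₁, …, n_k) ↦ (n₁ − 1, n₂, …, n_k)` if `n₁ ≥ 2`,
and `(1, n₂, …, n_k) ↦ (n₂, …, n_k)`. -/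
def TF : List ℕ → List ℕ
  | [] => []
  | 1 :: rest => rest
  | n :: rest => (n - 1) :: rest

/-- The flipped Farey map (parent map in the Farey tree):
`(n₁, …, n_k) ↦ (n₁, …, n_k − 1)`, a trailing zero being dropped. -/
def TpF (a : List ℕ) : List ℕ := (TF a.reverse).reverse

/-- Auxiliary: continuant computed from the front. -/
def contAux : List ℕ → ℕ
  | [] => 1
  | [n] => n
  | n :: m :: rest => n * contAux (m :: rest) + contAux rest

/-- The continuant `⟨n₁, …, n_k⟩`: `⟨⟩ = 1`, `⟨n₁⟩ = n₁`,
`⟨n₁, …, n_k⟩ = n_k ⟨n₁, …, n_{k−1}⟩ + ⟨n₁, …, n_{k−2}⟩`. -/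
def cont (a : List ℕ) : ℕ := contAux a.reverse

/-- Length of the Farey interval `I(a)`, the interval with endpoints
`[0; n₁, …, n_{k−1}]` and `[0; n₁, …, n_k]`. -/
def ilen (a : List ℕ) : ℚ := |cf a - cf a.dropLast|

/-- Auxiliary for `J`: process the middle entries `n₂, …, n_{k−1}`, keeping the
output built so far in reversed order; an entry `n ≥ 2` contributes the block
`1_{n−2}, 2`, while an entry `n = 1` contributes `1_{−1}, 2`, which is resolved
by the rule `(…, m, 1_{−1}, 2, …) = (…, m + 1, …)`. -/
def Jmid : List ℕ → List ℕ → List ℕ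
  | [], out => out
  | n :: rest, out =>
    if n = 1 then
      Jmid rest (match out with
        | [] => [1]
        | h :: t => (h + 1) :: t)
    else
      Jmid rest (2 :: (List.replicate (n - 2) 1 ++ out))

/-- Dyer's involution `J` (jimm) on tuples: `J(n₁) = 1_{n₁}` and, for `k ≥ 2`,
`J(n₁, …, n_k) = (1_{n₁−1}, 2, 1_{n₂−2}, 2, …, 1_{n_{k−1}−2}, 2, 1_{n_k−1})`,
with `1_0` deleted and `1_{−1}` resolved by `(…, m, 1_{−1}, n, …) = (…, m+n−1, …)`. -/
def J : List ℕ → List ℕ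
  | [] => []
  | [n] => List.replicate n 1
  | n :: rest =>
      (Jmid rest.dropLast (2 :: List.replicate (n - 1) 1)).reverse
        ++ List.replicate (rest.getLastD 1 - 1) 1

/-- The image of a generator: `true ↦ L = (2)`, `false ↦ R = (1,1)`. -/
def gen (b : Bool) : List ℕ := if b then [2] else [1, 1]

/-- The monoid homomorphism from the free monoid on two generators
(words over `Bool`) to `(X, ⋆)` sending the generators to `(2)` and `(1,1)`. -/
def toX (w : List Bool) : List ℕ := w.foldr (fun b acc => star (gen b) acc) [1]

/-!
A tuple is the run-length encoding of a word in `L` and `R`: `(n₁, …, n_k)` stands for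
`L^(n₁-1) R^n₂ L^n₃ ⋯`. The rules eliminating zero entries merge the runs on either side of an
empty run, so `⋆` encodes concatenation of words, and decoding is inverse to `toX`.
-/

/-- The word consisting of runs of the lengths listed, with alternating letters starting
from `b`. -/
def runs (b : Bool) : List ℕ → List Bool
  | [] => []
  | n :: t => List.replicate n b ++ runs (!b) t

/-- The word in `L = true`, `R = false` encoded by a tuple of `X`. The first run is one letter
shorter than the first entry, so that the empty word is encoded by the identity `(1)`. -/
def word (a : List ℕ) : List Bool := (runs true a).tail

theorem runs_singleton (b : Bool) (n : ℕ) : runs b [n] = List.replicate n b :=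
  List.append_nil _

theorem runs_append (b : Bool) (x y : List ℕ) :
    runs b (x ++ y) = runs b x ++ runs (not^[x.length] b) y := by
  induction x generalizing b with
  | nil => rfl
  | cons n x ih => simp [runs, ih]

theorem runs_add_cons (b : Bool) (m n : ℕ) (t : List ℕ) :
    runs b ((m + n) :: t) = List.replicate m b ++ runs b (n :: t) := by
  rw [runs, runs, List.replicate_add, List.append_assoc]

theorem takeWhile_runs_cons (b : Bool) (n : ℕ) {t : List ℕ} (ht : ∀ m ∈ t, 0 < m) :
    (runs b (n :: t)).takeWhile (· == b) = List.replicate n b := by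
  have next_run : (runs (!b) t).takeWhile (· == b) = [] := by
    cases t with
    | nil => rfl
    | cons m t =>
      obtain ⟨k, rfl⟩ := Nat.exists_eq_add_one.mpr (ht m List.mem_cons_self)
      simp [runs, List.replicate_succ]
  rw [runs, List.takeWhile_append_of_pos (by simp), next_run, List.append_nil]

theorem runs_injOn (b : Bool) : Set.InjOn (runs b) {a | ∀ n ∈ a, 0 < n} := by
  intro x hx y hy h
  induction x generalizing b y with
  | nil =>
    cases y with
    | nil => rfl
    | cons m t => simp_all [runs]
  | cons n s ih =>
    cases y with
    | nil => simp_all [runs]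
    | cons m t =>
      have hs := (List.forall_mem_cons.mp hx).2
      have ht := (List.forall_mem_cons.mp hy).2
      have first_run : n = m := by
        simpa [takeWhile_runs_cons b _ hs, takeWhile_runs_cons b _ ht]
          using congrArg (List.length ∘ List.takeWhile (· == b)) h
      subst first_run
      rw [ih (!b) hs ht (List.append_cancel_left h)]

theorem isX_append_cons {z t : List ℕ} {n : ℕ} :
    IsX (z ++ n :: t) ↔ (∀ k ∈ z, 0 < k) ∧ 0 < n ∧ ∀ k ∈ t, 0 < k := by
  simp [IsX, or_imp, forall_and]

theorem IsX.exists_eq_add_one_cons {a : List ℕ} (ha : IsX a) : ∃ m t, a = (m + 1) :: t := by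
  obtain ⟨n, t, rfl⟩ := List.exists_cons_of_ne_nil ha.1
  obtain ⟨m, rfl⟩ := Nat.exists_eq_add_one.mpr (ha.2 n List.mem_cons_self)
  exact ⟨m, t, rfl⟩

theorem IsX.true_cons_word {a : List ℕ} (ha : IsX a) : true :: word a = runs true a := by
  obtain ⟨m, t, rfl⟩ := ha.exists_eq_add_one_cons
  rfl

theorem word_add_one_cons (m : ℕ) (t : List ℕ) : word ((m + 1) :: t) = runs true (m :: t) := rfl

theorem word_injOn : Set.InjOn word {a | IsX a} := fun x hx y hy h =>
  runs_injOn true hx.2 hy.2 (by rw [← hx.true_cons_word, ← hy.true_cons_word, h])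

theorem star_singleton_one {x : List ℕ} (hx : x ≠ []) : star x [1] = x := by
  obtain ⟨z, n, rfl⟩ := (List.eq_nil_or_concat' x).resolve_left hx
  simp [_root_.star]

section Star

variable {z : List ℕ} (n m : ℕ) (t : List ℕ)

theorem star_append_singleton_of_even (hz : Even z.length) :
    star (z ++ [n]) ((m + 1) :: t) = z ++ (n + m) :: t := by
  have hlen : (z.length + 1) % 2 ≠ 0 := by grind
  simp [_root_.star, hlen, ← Nat.add_assoc]

theorem star_append_singleton_one_cons_of_odd (hz : Odd z.length) :
    star (z ++ [n]) (1 :: m :: t) = z ++ (n + m) :: t := by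
  have hlen : (z.length + 1) % 2 = 0 := by grind
  simp [_root_.star, hlen]

theorem star_append_singleton_add_two_of_odd (hz : Odd z.length) :
    star (z ++ [n]) ((m + 2) :: t) = z ++ n :: (m + 1) :: t := by
  have hlen : (z.length + 1) % 2 = 0 := by grind
  simp [_root_.star, hlen]

end Star

theorem isX_star {x y : List ℕ} (hx : IsX x) (hy : IsX y) : IsX (star x y) := by
  obtain ⟨z, n, rfl⟩ := (List.eq_nil_or_concat' x).resolve_left hx.1
  obtain ⟨m, t, rfl⟩ := hy.exists_eq_add_one_cons
  have hz_pos := isX_append_cons.mp hx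
  have hy_pos := hy.2
  rcases Nat.even_or_odd z.length with hz | hz
  · rw [star_append_singleton_of_even n m t hz, isX_append_cons]
    grind
  · match m, t with
    | 0, [] => rwa [star_singleton_one hx.1]
    | 0, p :: t =>
      rw [star_append_singleton_one_cons_of_odd n p t hz, isX_append_cons]
      grind
    | m + 1, t =>
      rw [star_append_singleton_add_two_of_odd n m t hz, isX_append_cons]
      grind

theorem runs_star {x : List ℕ} (hx : x ≠ []) (m : ℕ) (t : List ℕ) :
    runs true (star x ((m + 1) :: t)) = runs true x ++ runs true (m :: t) := by
  obtain ⟨z, n, rfl⟩ := (List.eq_nil_or_concat' x).resolve_left hx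
  rcases Nat.even_or_odd z.length with hz | hz
  · have last_letter : not^[z.length] true = true := by
      rw [Bool.involutive_not.iterate_even hz, id]
    rw [star_append_singleton_of_even n m t hz]
    simp only [runs_append, last_letter, runs_add_cons, runs_singleton, List.append_assoc]
  · have last_letter : not^[z.length] true = false := by
      rw [Bool.involutive_not.iterate_odd hz, Bool.not_true]
    match m, t with
    | 0, [] => rw [star_singleton_one hx, runs_singleton, List.replicate_zero, List.append_nil]
    | 0, p :: t =>
      have skip_empty_run : runs true (0 :: p :: t) = runs false (p :: t) := rfl
      rw [star_append_singleton_one_cons_of_odd n p t hz]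
      simp only [runs_append, last_letter, runs_add_cons, runs_singleton, skip_empty_run,
        List.append_assoc]
    | m + 1, t =>
      rw [star_append_singleton_add_two_of_odd n m t hz]
      simp [runs_append, last_letter, runs]

theorem word_star {x y : List ℕ} (hx : IsX x) (hy : IsX y) :
    word (star x y) = word x ++ word y := by
  obtain ⟨m, t, rfl⟩ := hy.exists_eq_add_one_cons
  rw [word, runs_star hx.1, ← hx.true_cons_word, List.cons_append, List.tail_cons,
    word_add_one_cons]

theorem isX_gen (b : Bool) : IsX (gen b) := by cases b <;> simp [IsX, gen]

theorem word_gen (b : Bool) : word (gen b) = [b] := by cases b <;> rfl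

theorem isX_toX (w : List Bool) : IsX (toX w) := by
  induction w with
  | nil => simp [toX, IsX]
  | cons b w ih => exact isX_star (isX_gen b) ih

theorem word_toX : Function.LeftInverse word toX := by
  intro w
  induction w with
  | nil => rfl
  | cons b w ih =>
    calc word (toX (b :: w))
      _ = word (gen b) ++ word (toX w) := word_star (isX_gen b) (isX_toX w)
      _ = b :: w := by rw [word_gen, ih, List.singleton_append]

theorem toX_word {a : List ℕ} (ha : IsX a) : toX (word a) = a :=
  word_injOn (isX_toX _) ha (word_toX _)

theorem toX_append (u v : List Bool) : toX (u ++ v) = star (toX u) (toX v) := by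
  apply word_injOn (isX_toX _) (isX_star (isX_toX u) (isX_toX v))
  rw [word_star (isX_toX u) (isX_toX v), word_toX, word_toX, word_toX]

/-- `(X, ⋆)` is freely generated by `L = (2)` and `R = (1,1)`: the monoid
homomorphism from the free monoid on two generators is bijective onto `X`. -/
theorem star_free_on_L_R :
    toX [] = [1] ∧
    (∀ u v : List Bool, toX (u ++ v) = star (toX u) (toX v)) ∧
    Function.Injective toX ∧
    (∀ a : List ℕ, IsX a ↔ ∃ w : List Bool, toX w = a) := by
  refine ⟨rfl, toX_append, word_toX.injective, fun a => ⟨fun ha => ⟨word a, toX_word ha⟩, ?_⟩⟩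
  rintro ⟨w, rfl⟩
  exact isX_toX w
end

section
/- The Lebesgue transition function is K-invariant: for every a ∈ X with a ≠ (1), π_λ(K(a)) = π_λ(a), where π_λ(a) := |I(a)|/|I(T_{φF}(a))|. -/
/-! `K` carries the Farey interval of `a` to that of `K a` by the isometry `x ↦ 1 - x`, and it
commutes with the parent map, so both interval lengths in the ratio are preserved. -/

theorem IsX.eq_singleton_one_or_exists_cons {a : List ℕ} (ha : IsX a) :
    a = [1] ∨ ∃ n t, 0 < n ∧ (a = 1 :: n :: t ∨ a = (n + 1) :: t) := by
  obtain ⟨hne, hpos⟩ := ha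
  match a with
  | [] => contradiction
  | 0 :: t => simp at hpos
  | [1] => exact .inl rfl
  | 1 :: n :: t => exact .inr ⟨n, t, hpos n (by simp), .inl rfl⟩
  | (n + 2) :: t => exact .inr ⟨n + 1, t, n.succ_pos, .inr rfl⟩

theorem isX_reverse {a : List ℕ} : IsX a.reverse ↔ IsX a := by
  simp [IsX]

theorem K_one_cons_cons (n : ℕ) (t : List ℕ) : K (1 :: n :: t) = (n + 1) :: t := by
  simp only [K]

theorem K_succ_cons {n : ℕ} (hn : 0 < n) (t : List ℕ) : K ((n + 1) :: t) = 1 :: n :: t := by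
  obtain ⟨m, rfl⟩ := Nat.exists_eq_succ_of_ne_zero hn.ne'
  simp [K]

theorem cf_nonneg (a : List ℕ) : 0 ≤ cf a := by
  induction a with
  | nil => rfl
  | cons n t ih => simp only [cf]; positivity

theorem cf_one_cons_cons {n : ℕ} (hn : 0 < n) (t : List ℕ) :
    cf (1 :: n :: t) = 1 - cf ((n + 1) :: t) := by
  have hx : 0 < n + cf t := add_pos_of_pos_of_nonneg (mod_cast hn) (cf_nonneg t)
  simp only [cf, Nat.cast_add, Nat.cast_one, add_right_comm]
  field_simp
  ring

theorem cf_dropLast_one_cons_cons {n : ℕ} (hn : 0 < n) (t : List ℕ) :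
    cf (1 :: n :: t).dropLast = 1 - cf ((n + 1) :: t).dropLast := by
  cases t with
  | nil => simp [cf]
  | cons m s => simpa only [List.dropLast_cons_cons] using cf_one_cons_cons hn _

theorem ilen_one_cons_cons {n : ℕ} (hn : 0 < n) (t : List ℕ) :
    ilen (1 :: n :: t) = ilen ((n + 1) :: t) := by
  rw [ilen, cf_one_cons_cons hn, cf_dropLast_one_cons_cons hn, sub_sub_sub_cancel_left,
    abs_sub_comm, ilen]

theorem ilen_K {a : List ℕ} (ha : IsX a) : ilen (K a) = ilen a := by
  obtain rfl | ⟨n, t, hn, rfl | rfl⟩ := ha.eq_singleton_one_or_exists_cons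
  · rfl
  · rw [K_one_cons_cons, ilen_one_cons_cons hn]
  · rw [K_succ_cons hn, ilen_one_cons_cons hn]

theorem TF_succ_cons {n : ℕ} (hn : 0 < n) (t : List ℕ) : TF ((n + 1) :: t) = n :: t := by
  obtain ⟨m, rfl⟩ := Nat.exists_eq_succ_of_ne_zero hn.ne'
  simp [TF]

theorem TF_append {a : List ℕ} (ha : a ≠ []) (b : List ℕ) : TF (a ++ b) = TF a ++ b := by
  match a with
  | 0 :: t => rfl
  | 1 :: t => rfl
  | (n + 2) :: t => rfl

theorem isX_TF {a : List ℕ} (ha : IsX a) (ha1 : a ≠ [1]) : IsX (TF a) := by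
  obtain rfl | ⟨n, t, hn, rfl | rfl⟩ := ha.eq_singleton_one_or_exists_cons
  · contradiction
  · exact ⟨List.cons_ne_nil n t, fun m hm => ha.2 m (List.mem_cons_of_mem 1 hm)⟩
  · rw [TF_succ_cons hn]
    exact ⟨List.cons_ne_nil n t,
      List.forall_mem_cons.2 ⟨hn, fun m hm => ha.2 m (List.mem_cons_of_mem _ hm)⟩⟩

theorem isX_TpF {a : List ℕ} (ha : IsX a) (ha1 : a ≠ [1]) : IsX (TpF a) :=
  isX_reverse.2 <| isX_TF (isX_reverse.2 ha) (by simpa [List.reverse_eq_iff] using ha1)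

theorem TpF_singleton_succ {n : ℕ} (hn : 0 < n) : TpF [n + 1] = [n] := by
  rw [TpF, List.reverse_singleton, TF_succ_cons hn, List.reverse_singleton]

theorem TpF_cons (n : ℕ) {t : List ℕ} (ht : t ≠ []) : TpF (n :: t) = n :: TpF t := by
  rw [TpF, List.reverse_cons, TF_append (List.reverse_ne_nil_iff.2 ht), List.reverse_append,
    List.reverse_singleton, List.singleton_append, TpF]

theorem TpF_K {a : List ℕ} (ha : IsX a) : TpF (K a) = K (TpF a) := by
  obtain rfl | ⟨n, t, hn, h⟩ := ha.eq_singleton_one_or_exists_cons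
  · rfl
  cases t with
  | nil =>
    by_cases hn1 : n = 1
    · subst hn1
      obtain rfl | rfl := h <;> rfl
    · obtain ⟨m, hm, rfl⟩ : ∃ m, 0 < m ∧ n = m + 1 := ⟨n - 1, by omega, by omega⟩
      obtain rfl | rfl := h
      · rw [K_one_cons_cons, TpF_singleton_succ hn, TpF_cons 1 (List.cons_ne_nil _ _),
          TpF_singleton_succ hm, K_one_cons_cons]
      · rw [K_succ_cons hn, TpF_singleton_succ hn, TpF_cons 1 (List.cons_ne_nil _ _),
          TpF_singleton_succ hm, K_succ_cons hm]
  | cons m s =>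
    have hs : m :: s ≠ [] := List.cons_ne_nil m s
    obtain rfl | rfl := h
    · rw [K_one_cons_cons, TpF_cons _ hs, TpF_cons 1 (List.cons_ne_nil _ _), TpF_cons n hs,
        K_one_cons_cons]
    · rw [K_succ_cons hn, TpF_cons _ hs, TpF_cons 1 (List.cons_ne_nil _ _), TpF_cons n hs,
        K_succ_cons hn]

/-- The Lebesgue transition function `π_λ(a) = |I(a)| / |I(T_{φF} a)|` is
`K`-invariant. -/
theorem pi_lambda_K_invariant (a : List ℕ) (h : IsX a) (h1 : a ≠ [1]) :
    ilen (K a) / ilen (TpF (K a)) = ilen a / ilen (TpF a) := by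
  rw [TpF_K h, ilen_K h, ilen_K (isX_TpF h h1)]
end

section
/- J commutes with K: for every a ∈ X, J(K(a)) = K(J(a)). -/
/-!
`K` is an involution exchanging `(m + 2, r)` and `(1, m + 1, r)`, so it is enough to prove
`J (1, m + 1, r) = K (J (m + 2, r))`. Both sides are determined by `b = J (1, r)`: on the right
`J (m + 2, r) = (1_{m+1}, b)`, and on the left `J (1, m + 1, r) = (2, 1_{m-1}, b)`, where
for `m = 0` the rule for `1_{-1}` adds one to the head of `b`, as `K` does on `(1, b)`.
-/

theorem K_one_cons {a : List ℕ} (ha : a ≠ []) : K (1 :: a) = a.modifyHead (· + 1) := by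
  cases a with
  | nil => contradiction
  | cons => rfl

theorem K_K {a : List ℕ} (ha : ∀ n ∈ a, 0 < n) : K (K a) = a := by
  match a with
  | [] | [1] | 1 :: (_ + 1) :: _ | (_ + 2) :: _ => rfl
  | 0 :: _ | 1 :: 0 :: _ => simp at ha

/-- The output is accumulated in reverse, so its head is the one old entry that later `1_{-1}` can
still raise. -/
theorem exists_Jmid_cons_eq (l : List ℕ) :
    ∃ (p : List ℕ) (c : ℕ), ∀ (h : ℕ) (s : List ℕ), Jmid l (h :: s) = p ++ (h + c) :: s := by
  induction l with
  | nil => exact ⟨[], 0, fun _ _ => rfl⟩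
  | cons n l ih =>
    obtain ⟨p, c, hp⟩ := ih
    by_cases hn : n = 1
    · exact ⟨p, 1 + c, fun h s => by simp [Jmid, hn, hp, add_assoc]⟩
    · exact ⟨p ++ (2 + c) :: List.replicate (n - 2) 1, 0, fun h s => by simp [Jmid, hn, hp]⟩

theorem Jmid_pos (l : List ℕ) {out : List ℕ} (hout : ∀ n ∈ out, 0 < n) :
    ∀ n ∈ Jmid l out, 0 < n := by
  induction l generalizing out with
  | nil => exact hout
  | cons m l ih =>
    unfold Jmid
    split
    · apply ih
      cases out <;> simp_all
    · apply ih
      simp only [List.mem_cons, List.mem_append, List.mem_replicate]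
      rintro n (rfl | ⟨-, rfl⟩ | hn)
      · exact two_pos
      · exact one_pos
      · exact hout n hn

theorem J_pos (a : List ℕ) : ∀ n ∈ J a, 0 < n := by
  have replicate_pos (m : ℕ) : ∀ n ∈ List.replicate m 1, 0 < n := fun n hn =>
    (List.eq_of_mem_replicate hn).symm ▸ one_pos
  match a with
  | [] => simp [J]
  | [m] => exact replicate_pos m
  | m :: x :: r =>
    intro n hn
    rcases List.mem_append.mp hn with hn | hn
    · refine Jmid_pos _ ?_ n (List.mem_reverse.mp hn)
      exact List.forall_mem_cons.mpr ⟨two_pos, replicate_pos _⟩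
    · exact replicate_pos _ n hn

theorem J_one_cons_ne_nil (r : List ℕ) : J (1 :: r) ≠ [] := by
  cases r with
  | nil => exact List.cons_ne_nil _ _
  | cons x r =>
    obtain ⟨p, c, hp⟩ := exists_Jmid_cons_eq (x :: r).dropLast
    simp [J, hp]

theorem J_succ_cons (n : ℕ) (r : List ℕ) :
    J ((n + 1) :: r) = List.replicate n 1 ++ J (1 :: r) := by
  cases r with
  | nil => exact List.replicate_succ'
  | cons x r =>
    obtain ⟨p, c, hp⟩ := exists_Jmid_cons_eq (x :: r).dropLast
    simp [J, hp]

theorem J_one_one_cons (r : List ℕ) : J (1 :: 1 :: r) = (J (1 :: r)).modifyHead (· + 1) := by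
  cases r with
  | nil => rfl
  | cons x r =>
    obtain ⟨p, c, hp⟩ := exists_Jmid_cons_eq (x :: r).dropLast
    simp [J, Jmid, hp, add_right_comm 2 c 1]

theorem J_one_add_two_cons (n : ℕ) (r : List ℕ) :
    J (1 :: (n + 2) :: r) = 2 :: (List.replicate n 1 ++ J (1 :: r)) := by
  cases r with
  | nil => exact congrArg (2 :: ·) List.replicate_succ'
  | cons x r =>
    obtain ⟨p, c, hp⟩ := exists_Jmid_cons_eq (x :: r).dropLast
    simp [J, Jmid, hp]

theorem J_one_succ_cons (m : ℕ) (r : List ℕ) : J (1 :: (m + 1) :: r) = K (J ((m + 2) :: r)) := by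
  cases m with
  | zero =>
    calc J (1 :: 1 :: r) = (J (1 :: r)).modifyHead (· + 1) := J_one_one_cons r
      _ = K (1 :: J (1 :: r)) := (K_one_cons (J_one_cons_ne_nil r)).symm
      _ = K (J (2 :: r)) := congrArg K (J_succ_cons 1 r).symm
  | succ n =>
    calc J (1 :: (n + 2) :: r) = 2 :: (List.replicate n 1 ++ J (1 :: r)) := J_one_add_two_cons n r
      _ = K (List.replicate (n + 2) 1 ++ J (1 :: r)) := rfl
      _ = K (J ((n + 3) :: r)) := congrArg K (J_succ_cons (n + 2) r).symm

/-- `J` commutes with `K`. -/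
theorem J_comm_K (a : List ℕ) (h : IsX a) : J (K a) = K (J a) := by
  match a, h with
  | [1], _ => rfl
  | (m + 2) :: r, _ => exact J_one_succ_cons m r
  | 1 :: (m + 1) :: r, _ =>
    calc J (K (1 :: (m + 1) :: r)) = J ((m + 2) :: r) := rfl
      _ = K (K (J ((m + 2) :: r))) := (K_K (J_pos _)).symm
      _ = K (J (1 :: (m + 1) :: r)) := congrArg K (J_one_succ_cons m r).symm
  | [], ⟨ne_nil, _⟩ => contradiction
  | 0 :: _, ⟨_, pos⟩ | 1 :: 0 :: _, ⟨_, pos⟩ => simp at pos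
end

section
/- J satisfies the functional equations of the Möbius maps x ↦ 1/(1+x) and x ↦ x/(1+x): for every a = (n_1,…,n_k) ∈ X, θ(J(1,n_1,n_2,…,n_k)) = θ(J(a))/(1+θ(J(a))) and θ(J(n_1+1,n_2,…,n_k)) = 1/(1+θ(J(a))). (Here (1,n_1,…,n_k) is the tuple with θ-value 1/(1+θ(a)) and (n_1+1,n_2,…,n_k) is the tuple with θ-value θ(a)/(1+θ(a)).) -/
/-!
`J` exchanges two ways of modifying a tuple: incrementing the first entry becomes prepending a `1`,
and prepending a `1` becomes incrementing the first entry. Under `theta`, prepending a `1` is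
`x ↦ 1 / (1 + x)` and incrementing the first entry is `x ↦ x / (1 + x)`. Since `Jmid` builds `J a`
in reversed order and touches only the head of its accumulator, the front of `J a` is the last entry
of the accumulator, and incrementing that entry commutes with the recursion.
-/

theorem theta_nil : theta [] = 1 := by
  simp [theta, cf]

theorem theta_cons (m : ℕ) (t : List ℕ) : theta (m :: t) = 1 / (m + theta t) := rfl

theorem theta_pos (a : List ℕ) : 0 < theta a := by
  induction a with
  | nil => simp [theta_nil]
  | cons m t ih => rw [theta_cons]; positivity

theorem theta_one_cons (a : List ℕ) : theta (1 :: a) = 1 / (1 + theta a) := by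
  rw [theta_cons, Nat.cast_one]

theorem theta_modifyHead_add_one {a : List ℕ} (ha : a ≠ []) :
    theta (a.modifyHead (· + 1)) = theta a / (1 + theta a) := by
  obtain ⟨m, t, rfl⟩ := List.exists_cons_of_ne_nil ha
  have ht : 0 < theta t := theta_pos t
  rw [List.modifyHead_cons, theta_cons, theta_cons, Nat.cast_add_one]
  field_simp
  ring

section ModifyLast

variable {α : Type*} (f : α → α)

theorem modifyLast_singleton (x : α) : [x].modifyLast f = [f x] :=
  List.modifyLast_concat f x []

theorem modifyLast_cons_of_ne_nil (x : α) {l : List α} (hl : l ≠ []) :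
    (x :: l).modifyLast f = x :: l.modifyLast f :=
  List.modifyLast_append_of_right_ne_nil f [x] l hl

theorem reverse_modifyLast (l : List α) :
    (l.modifyLast f).reverse = l.reverse.modifyHead f := by
  rcases l.eq_nil_or_concat' with rfl | ⟨s, x, rfl⟩
  · rfl
  · simp [List.modifyLast_concat]

end ModifyLast

theorem Jmid_one_cons (l : List ℕ) (h : ℕ) (t : List ℕ) :
    Jmid (1 :: l) (h :: t) = Jmid l ((h + 1) :: t) := by
  simp [Jmid]

theorem Jmid_cons_of_ne_one {n : ℕ} (hn : n ≠ 1) (l out : List ℕ) :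
    Jmid (n :: l) out = Jmid l (2 :: (List.replicate (n - 2) 1 ++ out)) := by
  simp [Jmid, hn]

theorem Jmid_ne_nil (l : List ℕ) {out : List ℕ} (hout : out ≠ []) : Jmid l out ≠ [] := by
  induction l generalizing out with
  | nil => exact hout
  | cons n l ih =>
    obtain ⟨h, t, rfl⟩ := List.exists_cons_of_ne_nil hout
    by_cases hn : n = 1
    · rw [hn, Jmid_one_cons]
      exact ih (List.cons_ne_nil _ _)
    · rw [Jmid_cons_of_ne_one hn]
      exact ih (List.cons_ne_nil _ _)

theorem Jmid_append (l : List ℕ) {out : List ℕ} (hout : out ≠ []) (s : List ℕ) :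
    Jmid l (out ++ s) = Jmid l out ++ s := by
  induction l generalizing out with
  | nil => rfl
  | cons n l ih =>
    by_cases hn : n = 1
    · obtain ⟨h, t, rfl⟩ := List.exists_cons_of_ne_nil hout
      rw [hn, List.cons_append, Jmid_one_cons, Jmid_one_cons, ← ih (List.cons_ne_nil _ _),
        List.cons_append]
    · rw [Jmid_cons_of_ne_one hn, Jmid_cons_of_ne_one hn, ← ih (List.cons_ne_nil _ _),
        List.cons_append, List.append_assoc]

theorem Jmid_modifyLast_add (l : List ℕ) {out : List ℕ} (hout : out ≠ []) (c : ℕ) :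
    Jmid l (out.modifyLast (· + c)) = (Jmid l out).modifyLast (· + c) := by
  induction l generalizing out with
  | nil => rfl
  | cons n l ih =>
    by_cases hn : n = 1
    · subst hn
      match out, hout with
      | [m], _ =>
        rw [modifyLast_singleton, Jmid_one_cons, Jmid_one_cons, ← ih (List.cons_ne_nil _ _),
          modifyLast_singleton, Nat.add_right_comm]
      | m :: k :: t, _ =>
        rw [modifyLast_cons_of_ne_nil _ _ (List.cons_ne_nil _ _), Jmid_one_cons, Jmid_one_cons,
          ← ih (List.cons_ne_nil _ _), modifyLast_cons_of_ne_nil _ _ (List.cons_ne_nil _ _)]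
    · rw [Jmid_cons_of_ne_one hn, Jmid_cons_of_ne_one hn, ← ih (List.cons_ne_nil _ _),
        modifyLast_cons_of_ne_nil _ _ (List.append_ne_nil_of_right_ne_nil _ hout),
        List.modifyLast_append_of_right_ne_nil _ _ _ hout]

theorem Jmid_cons_singleton_two {n : ℕ} (hn : 0 < n) (l : List ℕ) :
    Jmid (n :: l) [2] = (Jmid l (2 :: List.replicate (n - 1) 1)).modifyLast (· + 1) := by
  rw [← Jmid_modifyLast_add l (List.cons_ne_nil _ _)]
  match n, hn with
  | 1, _ => exact Jmid_one_cons l 2 []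
  | m + 2, _ =>
    have hrep : 2 :: List.replicate (m + 1) 1 = (2 :: List.replicate m 1) ++ [1] := by
      rw [List.replicate_succ', List.cons_append]
    calc Jmid ((m + 2) :: l) [2]
        = Jmid l ((2 :: List.replicate m 1) ++ [2]) := Jmid_cons_of_ne_one (by lia) l [2]
      _ = Jmid l ((2 :: List.replicate (m + 1) 1).modifyLast (· + 1)) := by
          rw [hrep, List.modifyLast_concat]

theorem J_singleton (n : ℕ) : J [n] = List.replicate n 1 := rfl

theorem J_cons_of_ne_nil (n : ℕ) {l : List ℕ} (hl : l ≠ []) :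
    J (n :: l) = (List.replicate (l.getLast hl - 1) 1 ++
      Jmid l.dropLast (2 :: List.replicate (n - 1) 1)).reverse := by
  obtain ⟨b, r, rfl⟩ := List.exists_cons_of_ne_nil hl
  simp only [J, List.reverse_append, List.reverse_replicate, List.getLastD_cons,
    List.getLast_eq_getLastD]

theorem J_ne_nil {n : ℕ} (hn : 0 < n) (l : List ℕ) : J (n :: l) ≠ [] := by
  by_cases hl : l = []
  · simp [hl, J_singleton, hn.ne']
  · simp [J_cons_of_ne_nil n hl, Jmid_ne_nil]

theorem J_add_one_cons {n : ℕ} (hn : 0 < n) (l : List ℕ) :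
    J ((n + 1) :: l) = 1 :: J (n :: l) := by
  by_cases hl : l = []
  · rw [hl, J_singleton, J_singleton, List.replicate_succ]
  · have hrep : List.replicate n 1 = List.replicate (n - 1) 1 ++ [1] := by
      rw [← List.replicate_succ', Nat.sub_add_cancel hn]
    rw [J_cons_of_ne_nil _ hl, J_cons_of_ne_nil _ hl, Nat.add_sub_cancel, hrep,
      ← List.cons_append, Jmid_append _ (List.cons_ne_nil _ _), ← List.append_assoc,
      List.reverse_concat]

theorem J_one_cons_cons {n : ℕ} (hn : 0 < n) (l : List ℕ) :
    J (1 :: n :: l) = (J (n :: l)).modifyHead (· + 1) := by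
  by_cases hl : l = []
  · obtain ⟨m, rfl⟩ := Nat.exists_eq_succ_of_ne_zero hn.ne'
    rw [hl, J_singleton, List.replicate_succ]
    rfl
  · let tail := List.replicate (l.getLast hl - 1) 1
    let out := Jmid l.dropLast (2 :: List.replicate (n - 1) 1)
    have hout : out ≠ [] := Jmid_ne_nil _ (List.cons_ne_nil _ _)
    calc J (1 :: n :: l)
        = (tail ++ Jmid (n :: l.dropLast) [2]).reverse := by
          rw [J_cons_of_ne_nil 1 (List.cons_ne_nil _ _), List.dropLast_cons_of_ne_nil hl,
            List.getLast_cons hl, Nat.sub_self, List.replicate_zero]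
      _ = (tail ++ out.modifyLast (· + 1)).reverse := by rw [Jmid_cons_singleton_two hn]
      _ = (tail ++ out).reverse.modifyHead (· + 1) := by
          rw [← List.modifyLast_append_of_right_ne_nil _ _ _ hout, reverse_modifyLast]
      _ = (J (n :: l)).modifyHead (· + 1) := by rw [J_cons_of_ne_nil n hl]

/-- `J` satisfies the functional equations of the Möbius maps `x ↦ 1/(1+x)` and
`x ↦ x/(1+x)`: for `a = (n₁, …, n_k) ∈ X`,
`θ(J(1, n₁, …, n_k)) = θ(J a) / (1 + θ(J a))` and
`θ(J(n₁ + 1, n₂, …, n_k)) = 1 / (1 + θ(J a))`. -/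
theorem J_functional_equations (n : ℕ) (rest : List ℕ) (h : IsX (n :: rest)) :
    theta (J (1 :: n :: rest)) = theta (J (n :: rest)) / (1 + theta (J (n :: rest))) ∧
    theta (J ((n + 1) :: rest)) = 1 / (1 + theta (J (n :: rest))) := by
  have hn : 0 < n := h.2 n List.mem_cons_self
  rw [J_one_cons_cons hn, J_add_one_cons hn]
  exact ⟨theta_modifyHead_add_one (J_ne_nil hn rest), theta_one_cons _⟩
end
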